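/- arXiv:1808.05550 — 2 statements merged into one kernel-verified Lean document; each statement's English description precedes it below -/
import Mathlib

section
/- (Alexandrov–Fenchel inequality for mixed discriminants, Hermitian case.) Let n ≥ 2. For any n×n Hermitian matrix B and any n×n Hermitian positive definite matrices A, A^(3), …, A^(n), one has D(A, B, A^(3), …, A^(n))² ≥ D(A, A, A^(3), …, A^(n)) · D(B, B, A^(3), …, A^(n)). -/
open Matrix MeasureTheory Finset ProbabilityTheory
open scoped Classical ComplexOrder

noncomputable section

/-- The mixed discriminant of `n` matrices `A 0, …, A (n-1)`:
`D(A₁,…,Aₙ) = (1/n!) Σ_{σ ∈ Sₙ} det M^σ`, where the `j`-th column of `M^σ`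
is the `j`-th column of `A (σ j)`. -/
def mixedDisc {n : ℕ} (A : Fin n → Matrix (Fin n) (Fin n) ℂ) : ℂ :=
  (n.factorial : ℂ)⁻¹ * ∑ σ : Equiv.Perm (Fin n), (Matrix.of fun i j => A (σ j) i j).det

/-- The real value of the mixed discriminant (real for Hermitian arguments). -/
def mixedDiscR {n : ℕ} (A : Fin n → Matrix (Fin n) (Fin n) ℂ) : ℝ := (mixedDisc A).re

end

/-!
Write `D` for the mixed discriminant, viewed as a symmetric multilinear form. On the diagonal it is
the determinant, and `det (X + i Y) ≠ 0` whenever `X` is Hermitian and `Y` is positive definite.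

This nonvanishing survives fixing the last argument at a positive definite matrix `C`. For `Z` in
the tube `{X + i Y}`, the polynomial `t ↦ D(Z + tC, …, Z + tC)` has all its roots in the open lower
half plane, hence so has its derivative by the Gauss–Lucas theorem; but the value of the derivative
at `t = 0` is a positive multiple of `D(Z, …, Z, C)`.

Fixing all arguments but two leaves a symmetric form `Q` in two variables, and
`Q(zA + B, zA + B) = Q(A, A) z² + 2 Q(A, B) z + Q(B, B)` is a real polynomial in `z` without zeros
in the upper half plane. Its discriminant is therefore nonnegative, which is the inequality.
-/

noncomputable section

open Polynomial ComplexStarModule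

theorem mem_of_isRoot_derivative_of_convex {s : Set ℂ} (hs : Convex ℝ s) {p : ℂ[X]}
    (hp : derivative p ≠ 0) (hroots : ∀ w, p.IsRoot w → w ∈ s) {z : ℂ}
    (hz : (derivative p).IsRoot z) : z ∈ s := by
  have hdeg : 0 < p.degree := by
    contrapose! hp
    rw [eq_C_of_degree_le_zero hp, derivative_C]
  have hmem : z ∈ (derivative p).rootSet ℂ := by
    simpa [mem_rootSet, hp] using hz
  refine convexHull_min (fun w hw => hroots w ?_) hs
    (rootSet_derivative_subset_convexHull_rootSet hdeg hmem)
  simpa using (mem_rootSet.1 hw).2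

theorem mul_le_sq_of_quadratic_ne_zero {a b c : ℝ}
    (h : ∀ z : ℂ, 0 < z.im → a * z ^ 2 + 2 * b * z + c ≠ 0) : a * c ≤ b ^ 2 := by
  by_contra! hlt
  have ha : a ≠ 0 := by
    rintro rfl
    nlinarith [sq_nonneg b]
  have hpos : 0 < c / a - (b / a) ^ 2 := by
    have : c / a - (b / a) ^ 2 = (a * c - b ^ 2) / a ^ 2 := by field_simp
    rw [this]
    exact div_pos (sub_pos.2 hlt) (by positivity)
  set s := √(c / a - (b / a) ^ 2) with hs
  have hs_sq : (s : ℂ) ^ 2 = c / a - (b / a) ^ 2 := by exact_mod_cast Real.sq_sqrt hpos.le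
  -- Of the two conjugate roots, this is the one in the upper half plane.
  refine h (-(b / a : ℝ) + s * Complex.I) (by simpa [hs] using hpos) ?_
  have ha' : (a : ℂ) ≠ 0 := by exact_mod_cast ha
  push_cast
  calc (a : ℂ) * (-(b / a) + s * Complex.I) ^ 2 + 2 * b * (-(b / a) + s * Complex.I) + c
      = a * (c / a - (b / a) ^ 2 - s ^ 2) := by
        field_simp
        linear_combination (a * s) ^ 2 * Complex.I_sq
    _ = 0 := by rw [hs_sq, sub_self, mul_zero]

section LinePolynomial

variable {R ι : Type*} {M : ι → Type*} [CommSemiring R] [∀ i, AddCommMonoid (M i)]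
  [∀ i, Module R (M i)] [Fintype ι] [DecidableEq ι]

/-- The restriction `t ↦ f (u + t • v)` of a multilinear form to a line, as a polynomial. -/
def linePolynomial (f : MultilinearMap R M R) (u v : ∀ i, M i) : R[X] :=
  ∑ s : Finset ι, C (f (s.piecewise v u)) * X ^ #s

variable (f : MultilinearMap R M R) (u v : ∀ i, M i)

theorem eval_linePolynomial (t : R) : (linePolynomial f u v).eval t = f (u + t • v) := by
  have hterm (s : Finset ι) : f (s.piecewise (t • v) u) = t ^ #s * f (s.piecewise v u) := by
    have := f.map_piecewise_smul (fun _ => t) (s.piecewise v u) s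
    rw [prod_const, smul_eq_mul] at this
    rw [← this]
    congr 1
    ext i
    by_cases hi : i ∈ s <;> simp [hi]
  simp only [linePolynomial, eval_finsetSum, eval_mul, eval_C, eval_X_pow, add_comm u,
    f.map_add_univ, hterm, mul_comm]

theorem coeff_linePolynomial (k : ℕ) :
    (linePolynomial f u v).coeff k = ∑ s ∈ powersetCard k univ, f (s.piecewise v u) := by
  simp [linePolynomial, coeff_X_pow, powersetCard_eq_filter, sum_filter, eq_comm]

theorem coeff_card_linePolynomial :
    (linePolynomial f u v).coeff (Fintype.card ι) = f v := by
  rw [coeff_linePolynomial, ← card_univ, powersetCard_self, sum_singleton, piecewise_univ]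

theorem eval_zero_derivative_linePolynomial :
    (derivative (linePolynomial f u v)).eval 0 = f.linearDeriv u v := by
  rw [← coeff_zero_eq_eval_zero, coeff_derivative, coeff_linePolynomial, zero_add,
    powersetCard_one, sum_map]
  simp [MultilinearMap.linearDeriv_apply, Finset.piecewise_singleton]

end LinePolynomial

section FixLast

variable {R M N : Type*} [CommSemiring R] [AddCommMonoid M] [Module R M] [AddCommMonoid N]
  [Module R N] {n : ℕ}

/-- The multilinear map in one variable less obtained by fixing the last argument. -/
def fixLast (f : MultilinearMap R (fun _ : Fin (n + 1) => M) N) (c : M) :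
    MultilinearMap R (fun _ : Fin n => M) N :=
  (LinearMap.applyₗ c).compMultilinearMap f.curryRight

theorem fixLast_apply (f : MultilinearMap R (fun _ : Fin (n + 1) => M) N) (c : M)
    (x : Fin n → M) : fixLast f c x = f (Fin.snoc x c) :=
  rfl

end FixLast

theorem snoc_comp_perm {α : Type*} {n : ℕ} (σ : Equiv.Perm (Fin n)) (x : Fin n → α)
    (c : α) :
    (Fin.snoc (x ∘ σ) c : Fin (n + 1) → α) =
      Fin.snoc x c ∘ finSuccEquivLast.permCongr.symm (Equiv.optionCongr σ) := by
  funext i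
  induction i using Fin.lastCases <;> simp

section HyperbolicForm

variable {M : Type*} [AddCommGroup M] [Module ℂ M] [StarAddMonoid M] [StarModule ℂ M] {n : ℕ}
  {K : ConvexCone ℝ (selfAdjoint M)}

/-- The polarised forms of the real homogeneous polynomials that are hyperbolic (in Gårding's
sense) in every direction of the cone `K`. Hyperbolicity is encoded as nonvanishing on the tube
`{x + i y | y ∈ K}` of the complexification. -/
structure IsHyperbolicForm (K : ConvexCone ℝ (selfAdjoint M))
    (f : MultilinearMap ℂ (fun _ : Fin n => M) ℂ) : Prop where
  map_comp_perm (σ : Equiv.Perm (Fin n)) (x : Fin n → M) : f (x ∘ σ) = f x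
  im_eq_zero (x : Fin n → selfAdjoint M) : (f fun i => (x i : M)).im = 0
  ne_zero {z : M} (hz : ℑ z ∈ K) : f (fun _ => z) ≠ 0

theorem imaginaryPart_add_smul_coe (z : M) (t : ℂ) (c : selfAdjoint M) :
    ℑ (z + t • (c : M)) = ℑ z + t.im • c := by
  simp [imaginaryPart_smul]

theorem imaginaryPart_add_smul_coe_mem {z : M} (hz : ℑ z ∈ K) {c : selfAdjoint M} (hc : c ∈ K)
    {t : ℂ} (ht : 0 ≤ t.im) : ℑ (z + t • (c : M)) ∈ K := by
  rw [imaginaryPart_add_smul_coe]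
  obtain ht | ht := ht.eq_or_lt
  · rwa [← ht, zero_smul, add_zero]
  · exact K.add_mem hz (K.smul_mem ht hc)

namespace IsHyperbolicForm

theorem map_const_ne_zero {f : MultilinearMap ℂ (fun _ : Fin n => M) ℂ}
    (hf : IsHyperbolicForm K f) {c : selfAdjoint M} (hc : c ∈ K) : f (fun _ => (c : M)) ≠ 0 := by
  have hI : f (fun _ => Complex.I • (c : M)) ≠ 0 := hf.ne_zero (by simpa using hc)
  rw [f.map_smul_univ] at hI
  exact right_ne_zero_of_smul hI

variable {f : MultilinearMap ℂ (fun _ : Fin (n + 1) => M) ℂ}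

theorem map_update_const (hf : IsHyperbolicForm K f) (z c : M) (i : Fin (n + 1)) :
    f (Function.update (fun _ => z) i c) = fixLast f c (fun _ => z) := by
  have hlast : Function.update (fun _ => z) (Fin.last n) c = Fin.snoc (fun _ : Fin n => z) c := by
    funext j
    induction j using Fin.lastCases <;> simp
  have hswap : Function.update (fun _ => z) i c
      = Function.update (fun _ => z) (Fin.last n) c ∘ Equiv.swap i (Fin.last n) := by
    rw [Function.update_comp_equiv, Equiv.symm_swap, Equiv.swap_apply_right]
    rfl
  rw [hswap, hf.map_comp_perm, hlast, fixLast_apply]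

theorem linearDeriv_const (hf : IsHyperbolicForm K f) (z c : M) :
    f.linearDeriv (fun _ => z) (fun _ => c) = (n + 1) * fixLast f c (fun _ => z) := by
  simp [MultilinearMap.linearDeriv_apply, hf.map_update_const]

theorem fixLast_const_ne_zero (hf : IsHyperbolicForm K f) {c : selfAdjoint M} (hc : c ∈ K)
    {z : M} (hz : ℑ z ∈ K) : fixLast f (c : M) (fun _ => z) ≠ 0 := by
  intro h
  set p := linePolynomial f (fun _ => z) (fun _ => (c : M))
  have hroots (t : ℂ) (ht : p.IsRoot t) : t ∈ {w : ℂ | w.im < 0} := by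
    contrapose! ht
    rw [IsRoot, eval_linePolynomial]
    exact hf.ne_zero (imaginaryPart_add_smul_coe_mem hz hc (not_lt.1 ht))
  have hderiv : derivative p ≠ 0 := by
    intro h0
    have hcoeff : p.coeff (n + 1) = f fun _ => (c : M) := by
      simpa using coeff_card_linePolynomial f (fun _ => z) (fun _ => (c : M))
    have htop := coeff_derivative p n
    rw [h0, coeff_zero, hcoeff, zero_eq_mul] at htop
    exact htop.elim (hf.map_const_ne_zero hc) (Nat.cast_add_one_ne_zero n)
  have hzero : (derivative p).IsRoot 0 := by
    rw [IsRoot, eval_zero_derivative_linePolynomial, hf.linearDeriv_const, h, mul_zero]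
  simpa using mem_of_isRoot_derivative_of_convex (convex_halfSpace_im_lt 0) hderiv hroots hzero

protected theorem fixLast (hf : IsHyperbolicForm K f) {c : selfAdjoint M} (hc : c ∈ K) :
    IsHyperbolicForm K (fixLast f (c : M)) where
  map_comp_perm σ x := by
    rw [fixLast_apply, fixLast_apply, snoc_comp_perm, hf.map_comp_perm]
  im_eq_zero x := by
    have hcoe : (fun i => ((Fin.snoc x c : Fin (n + 1) → selfAdjoint M) i : M))
        = Fin.snoc (fun i => (x i : M)) (c : M) := Fin.comp_snoc _ x c
    rw [fixLast_apply, ← hcoe]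
    exact hf.im_eq_zero _
  ne_zero := hf.fixLast_const_ne_zero hc

theorem map_add_smul {f : MultilinearMap ℂ (fun _ : Fin 2 => M) ℂ} (hf : IsHyperbolicForm K f)
    (a b : M) (z : ℂ) :
    f (fun _ => b + z • a) = f ![a, a] * z ^ 2 + 2 * f ![a, b] * z + f ![b, b] := by
  have hsymm (x y : M) : f ![x, y] = f ![y, x] := by
    rw [← hf.map_comp_perm (Equiv.swap 0 1) ![x, y]]
    congr 1
    funext i
    fin_cases i <;> rfl
  have hleft (y : M) : f ![b + z • a, y] = f ![b, y] + z * f ![a, y] := by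
    have hadd : f ![b + z • a, y] = f ![b, y] + f ![z • a, y] := f.cons_add ![y] b (z • a)
    have hsmul : f ![z • a, y] = z * f ![a, y] := f.cons_smul ![y] z a
    rw [hadd, hsmul]
  have hconst : (fun _ => b + z • a) = ![b + z • a, b + z • a] := by
    funext i
    fin_cases i <;> rfl
  rw [hconst, hleft, hsymm b, hsymm a, hleft, hleft, hsymm b a]
  ring

theorem mul_le_sq {f : MultilinearMap ℂ (fun _ : Fin 2 => M) ℂ} (hf : IsHyperbolicForm K f)
    {a : selfAdjoint M} (ha : a ∈ K) (b : selfAdjoint M) :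
    (f ![(a : M), a]).re * (f ![(b : M), b]).re ≤ (f ![(a : M), b]).re ^ 2 := by
  have hreal (x y : selfAdjoint M) : f ![(x : M), y] = (f ![(x : M), y]).re := by
    have hcoe : (fun i => ((![x, y] i : selfAdjoint M) : M)) = ![(x : M), y] := by
      funext i
      fin_cases i <;> rfl
    rw [← hcoe]
    exact Complex.ext rfl (hf.im_eq_zero ![x, y])
  refine mul_le_sq_of_quadratic_ne_zero fun z hz => ?_
  rw [← hreal, ← hreal, ← hreal, ← hf.map_add_smul]
  refine hf.ne_zero ?_
  rw [imaginaryPart_add_smul_coe, selfAdjoint.imaginaryPart_coe, zero_add]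
  exact K.smul_mem hz ha

theorem alexandrov_fenchel {m : ℕ} {f : MultilinearMap ℂ (fun _ : Fin (2 + m) => M) ℂ}
    (hf : IsHyperbolicForm K f) {a : selfAdjoint M} (ha : a ∈ K) (b : selfAdjoint M)
    {c : Fin m → selfAdjoint M} (hc : ∀ i, c i ∈ K) :
    (f (Fin.append ![(a : M), a] fun i => (c i : M))).re
        * (f (Fin.append ![(b : M), b] fun i => (c i : M))).re
      ≤ (f (Fin.append ![(a : M), b] fun i => (c i : M))).re ^ 2 := by
  induction m with
  | zero => simpa [Fin.append_right_nil] using hf.mul_le_sq ha b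
  | succ m ih =>
    have h := ih (hf.fixLast (hc (Fin.last m))) (c := Fin.init c) (fun i => hc i.castSucc)
    have happend (x y : M) :
        (Fin.append ![x, y] fun i => (c i : M))
          = Fin.snoc (Fin.append ![x, y] fun i => (Fin.init c i : M)) (c (Fin.last m)) := by
      rw [← Fin.append_snoc]
      congr 1
      exact (Fin.snoc_init_self _).symm
    simpa only [happend, fixLast_apply] using h

end IsHyperbolicForm

end HyperbolicForm

section PosDef

variable {ι : Type*} [Fintype ι]

variable (ι) in
/-- The positive definite complex matrices, as a cone in the real space of Hermitian matrices. -/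
def posDefCone : ConvexCone ℝ (selfAdjoint (Matrix ι ι ℂ)) where
  carrier := {A | (A : Matrix ι ι ℂ).PosDef}
  smul_mem' _ ht _ hA := hA.smul ht
  add_mem' _ hA _ hB := hA.add hB

theorem det_ne_zero_of_imaginaryPart_mem_posDefCone [DecidableEq ι] {Z : Matrix ι ι ℂ}
    (hZ : ℑ Z ∈ posDefCone ι) :
    Z.det ≠ 0 := by
  intro hdet
  obtain ⟨v, hv, hZv⟩ := Matrix.exists_mulVec_eq_zero_iff.2 hdet
  have hre : (star v ⬝ᵥ ((ℜ Z : Matrix ι ι ℂ) *ᵥ v)).im = 0 :=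
    IsHermitian.im_star_dotProduct_mulVec_self (ℜ Z).2 v
  have him : 0 < (star v ⬝ᵥ ((ℑ Z : Matrix ι ι ℂ) *ᵥ v)).re :=
    (Complex.lt_def.1 (PosDef.dotProduct_mulVec_pos hZ hv)).1
  have hsum : (star v ⬝ᵥ (Z *ᵥ v)).im = (star v ⬝ᵥ ((ℑ Z : Matrix ι ι ℂ) *ᵥ v)).re := by
    conv_lhs => rw [← realPart_add_I_smul_imaginaryPart Z]
    simp [Matrix.add_mulVec, Matrix.smul_mulVec, hre]
  rw [hZv, dotProduct_zero, Complex.zero_im] at hsum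
  exact him.ne hsum

end PosDef

section MixedDisc

variable {n : ℕ}

theorem mixedDisc_comp_perm (A : Fin n → Matrix (Fin n) (Fin n) ℂ) (σ : Equiv.Perm (Fin n)) :
    mixedDisc (A ∘ σ) = mixedDisc A := by
  unfold mixedDisc
  congr 1
  exact Fintype.sum_equiv (Equiv.mulLeft σ) _ _ fun _ => rfl

theorem mixedDisc_const (Z : Matrix (Fin n) (Fin n) ℂ) : mixedDisc (fun _ => Z) = Z.det := by
  have : (n.factorial : ℂ) ≠ 0 := by exact_mod_cast n.factorial_ne_zero
  change (n.factorial : ℂ)⁻¹ * ∑ _σ : Equiv.Perm (Fin n), Z.det = Z.det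
  simp [Fintype.card_perm, this]

theorem mixedDisc_transpose (A : Fin n → Matrix (Fin n) (Fin n) ℂ) :
    mixedDisc (fun i => (A i)ᵀ) = mixedDisc A := by
  simp only [mixedDisc, det_apply', of_apply, transpose_apply]
  congr 1
  calc ∑ σ : Equiv.Perm (Fin n), ∑ τ : Equiv.Perm (Fin n),
        ((Equiv.Perm.sign τ : ℤ) : ℂ) * ∏ i, A (σ i) i (τ i)
      = ∑ τ : Equiv.Perm (Fin n), ∑ σ : Equiv.Perm (Fin n),
        ((Equiv.Perm.sign τ : ℤ) : ℂ) * ∏ i, A (σ i) i (τ i) := sum_comm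
    _ = ∑ τ : Equiv.Perm (Fin n), ∑ σ : Equiv.Perm (Fin n),
        ((Equiv.Perm.sign τ : ℤ) : ℂ) * ∏ i, A (σ i) (τ i) i := by
      refine Fintype.sum_equiv (Equiv.inv _) _ _ fun τ => ?_
      refine Fintype.sum_equiv (Equiv.mulRight τ⁻¹) _ _ fun σ => ?_
      have hprod : ∏ i, A (σ i) i (τ i) = ∏ i, A ((σ * τ⁻¹) i) (τ⁻¹ i) i :=
        Fintype.prod_equiv τ _ _ fun i => by simp
      rw [hprod, Equiv.inv_apply, Equiv.Perm.sign_inv, Equiv.coe_mulRight]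
    _ = ∑ σ : Equiv.Perm (Fin n), ∑ τ : Equiv.Perm (Fin n),
        ((Equiv.Perm.sign τ : ℤ) : ℂ) * ∏ i, A (σ i) (τ i) i := sum_comm

theorem star_mixedDisc (A : Fin n → Matrix (Fin n) (Fin n) ℂ) :
    star (mixedDisc A) = mixedDisc (fun i => (A i)ᴴ) := by
  rw [← mixedDisc_transpose fun i => (A i)ᴴ]
  simp only [mixedDisc, star_mul', star_inv₀, star_natCast, star_sum]
  congr! 2 with σ
  exact (RingHom.map_det (starRingEnd ℂ) _)

theorem im_mixedDisc_eq_zero {A : Fin n → Matrix (Fin n) (Fin n) ℂ} (hA : ∀ i, (A i).IsHermitian) :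
    (mixedDisc A).im = 0 := by
  refine Complex.conj_eq_iff_im.1 ((star_mixedDisc A).trans ?_)
  simp only [(hA _).eq]

variable (n) in
/-- The mixed discriminant as a multilinear form. The determinants are transposed because
`detRowAlternating` is multilinear in the rows. -/
def mixedDiscForm : MultilinearMap ℂ (fun _ : Fin n => Matrix (Fin n) (Fin n) ℂ) ℂ :=
  (n.factorial : ℂ)⁻¹ • ∑ σ : Equiv.Perm (Fin n),
    (detRowAlternating.toMultilinearMap.compLinearMap fun j =>
      LinearMap.proj j ∘ₗ (transposeLinearEquiv (Fin n) (Fin n) ℂ ℂ).toLinearMap).domDomCongr σ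

theorem mixedDiscForm_apply (A : Fin n → Matrix (Fin n) (Fin n) ℂ) :
    mixedDiscForm n A = mixedDisc A := by
  simp only [mixedDiscForm, mixedDisc, _root_.smul_apply, _root_.sum_apply,
    smul_eq_mul]
  congr! 2 with σ
  exact det_transpose (of fun i j => A (σ j) i j)

theorem isHyperbolicForm_mixedDiscForm :
    IsHyperbolicForm (posDefCone (Fin n)) (mixedDiscForm n) where
  map_comp_perm σ A := by
    simp only [mixedDiscForm_apply, mixedDisc_comp_perm]
  im_eq_zero A := by
    rw [mixedDiscForm_apply]
    exact im_mixedDisc_eq_zero fun i => (A i).2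
  ne_zero hZ := by
    rw [mixedDiscForm_apply, mixedDisc_const]
    exact det_ne_zero_of_imaginaryPart_mem_posDefCone hZ

theorem mixedDiscR_append_mul_mixedDiscR_append_le_sq {m : ℕ}
    {A B : Matrix (Fin (2 + m)) (Fin (2 + m)) ℂ} (hA : A.PosDef) (hB : B.IsHermitian)
    {C : Fin m → Matrix (Fin (2 + m)) (Fin (2 + m)) ℂ} (hC : ∀ i, (C i).PosDef) :
    mixedDiscR (Fin.append ![A, A] C) * mixedDiscR (Fin.append ![B, B] C)
      ≤ mixedDiscR (Fin.append ![A, B] C) ^ 2 := by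
  simp only [mixedDiscR, ← mixedDiscForm_apply]
  exact isHyperbolicForm_mixedDiscForm.alexandrov_fenchel (a := ⟨A, hA.isHermitian⟩) hA ⟨B, hB⟩
    (c := fun i => ⟨C i, (hC i).isHermitian⟩) hC

end MixedDisc

end

/-- **Alexandrov–Fenchel inequality for mixed discriminants** (Hermitian case):
for Hermitian `B` and Hermitian positive definite `A, A₃, …, Aₙ`,
`D(A,B,A₃,…,Aₙ)² ≥ D(A,A,A₃,…,Aₙ) · D(B,B,A₃,…,Aₙ)`. -/
theorem alexandrov_fenchel_mixedDisc {n : ℕ} (hn : 2 ≤ n)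
    (A B : Matrix (Fin n) (Fin n) ℂ) (hA : A.PosDef) (hB : B.IsHermitian)
    (C : Fin n → Matrix (Fin n) (Fin n) ℂ) (hC : ∀ i : Fin n, 2 ≤ (i : ℕ) → (C i).PosDef) :
    mixedDiscR (fun i => if (i : ℕ) ≤ 1 then A else C i)
        * mixedDiscR (fun i => if (i : ℕ) ≤ 1 then B else C i)
      ≤ mixedDiscR (fun i => if (i : ℕ) = 0 then A else if (i : ℕ) = 1 then B else C i) ^ 2 := by
  obtain ⟨m, rfl⟩ := Nat.exists_eq_add_of_le hn
  have happend (X Y : Matrix (Fin (2 + m)) (Fin (2 + m)) ℂ) :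
      (fun i : Fin (2 + m) => if (i : ℕ) = 0 then X else if (i : ℕ) = 1 then Y else C i)
        = Fin.append ![X, Y] (C ∘ Fin.natAdd 2) := by
    funext i
    induction i using Fin.addCases with
    | left i => fin_cases i <;> simp
    | right i => grind [Fin.append_right]
  have hdiag (X : Matrix (Fin (2 + m)) (Fin (2 + m)) ℂ) :
      (fun i : Fin (2 + m) => if (i : ℕ) ≤ 1 then X else C i)
        = fun i : Fin (2 + m) => if (i : ℕ) = 0 then X else if (i : ℕ) = 1 then X else C i := by
    funext i
    grind
  rw [hdiag, hdiag, happend, happend, happend]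
  exact mixedDiscR_append_mul_mixedDiscR_append_le_sq hA hB fun i =>
    hC _ (Nat.le_add_right 2 i)
end

section
/- Let A be an n×n Hermitian positive definite matrix and C an n×n Hermitian matrix. Define T = ∫_0^∞ (A+τI)^{−1} C (A+τI)^{−1} dτ and R = 2∫_0^∞ (A+τI)^{−1} C (A+τI)^{−1} C (A+τI)^{−1} dτ. Then for every n×n Hermitian positive semi-definite matrix B: ∫_0^1 trace[T B^s T B^{1−s}] ds − trace[R B] ≤ 0. -/
open Matrix MeasureTheory Finset ProbabilityTheory
open scoped Classical ComplexOrder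

noncomputable section

/-- Matrix real power `A ^ s`, defined via the spectral decomposition for Hermitian matrices,
applying `t ↦ t ^ s` (real `rpow`, so `0 ^ 0 = 1`) to each eigenvalue (junk value `0`
otherwise). -/
def matRpow {n : ℕ} (A : Matrix (Fin n) (Fin n) ℂ) (s : ℝ) : Matrix (Fin n) (Fin n) ℂ :=
  if hA : A.IsHermitian then
    (hA.eigenvectorUnitary : Matrix (Fin n) (Fin n) ℂ) *
      Matrix.diagonal (fun i => ((hA.eigenvalues i ^ s : ℝ) : ℂ)) *
      (star (hA.eigenvectorUnitary : Matrix (Fin n) (Fin n) ℂ))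
  else 0

end

/-!
For `u > 0` let `Y u` be the solution of the Sylvester equation `A Y + u Y A = C`. Substitutions
`τ = u a` in the scalar integrals seen by the eigenbasis of `A` give
`T = ∫₀^∞ Y u du / (1 + u)` and `R = ∫₀^∞ (Y u (Y u)ᴴ + u (Y u)ᴴ (Y u)) du / (1 + u)`.

In an eigenbasis of `B`, with eigenvalues `b`, the number `trace (R B)` is therefore the integral of
`∑ k l, (b k + u b l) |Y u k l|²` against `du / (1 + u)`, while the left-hand side of the inequality
is `∑ k l, m k l |T k l|²` with `m k l` the logarithmic mean of `b k` and `b l`. Completing the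
square bounds `2 m Re (conj T * Y)` by `(b k + u b l) |Y|² + m² |T|² / (b k + u b l)` for every `u`,
and `∫₀^∞ du / ((1 + u) (b k + u b l)) = 1 / m k l`, so integration gives `2 m |T|²` on the left and
`m |T|²` from the last term.
-/

section HasIntegralOn

variable {α E F : Type*} [MeasurableSpace α] [NormedAddCommGroup E] [NormedSpace ℝ E]
  [NormedAddCommGroup F] [NormedSpace ℝ F] {μ : Measure α} {s : Set α}

/-- The Bochner integral of `f` over `s` converges and has value `v`; unlike the bare equation
`∫ x in s, f x ∂μ = v`, this excludes the junk value `0` at non-integrable `f`. -/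
def HasIntegralOn (f : α → E) (s : Set α) (v : E) (μ : Measure α := by volume_tac) : Prop :=
  IntegrableOn f s μ ∧ ∫ x in s, f x ∂μ = v

namespace HasIntegralOn

theorem congr {f g : α → E} {v : E} (h : HasIntegralOn f s v μ) (hs : MeasurableSet s)
    (hfg : Set.EqOn f g s) : HasIntegralOn g s v μ :=
  ⟨h.1.congr_fun hfg hs, (setIntegral_congr_fun hs hfg).symm.trans h.2⟩

theorem add {f g : α → E} {v w : E} (hf : HasIntegralOn f s v μ) (hg : HasIntegralOn g s w μ) :
    HasIntegralOn (fun x => f x + g x) s (v + w) μ :=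
  ⟨hf.1.add hg.1, by rw [integral_add hf.1 hg.1, hf.2, hg.2]⟩

theorem sum {ι : Type*} {t : Finset ι} {f : ι → α → E} {v : ι → E}
    (h : ∀ i ∈ t, HasIntegralOn (f i) s (v i) μ) :
    HasIntegralOn (fun x => ∑ i ∈ t, f i x) s (∑ i ∈ t, v i) μ :=
  ⟨integrable_finsetSum _ fun i hi => (h i hi).1, by
    rw [integral_finsetSum _ fun i hi => (h i hi).1]
    exact Finset.sum_congr rfl fun i hi => (h i hi).2⟩

theorem const_mul {f : α → ℝ} {v : ℝ} (h : HasIntegralOn f s v μ) (c : ℝ) :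
    HasIntegralOn (fun x => c * f x) s (c * v) μ :=
  ⟨h.1.const_mul c, by rw [integral_const_mul, h.2]⟩

theorem smul_const [CompleteSpace E] {f : α → ℝ} {v : ℝ} (h : HasIntegralOn f s v μ) (z : E) :
    HasIntegralOn (fun x => f x • z) s (v • z) μ :=
  ⟨h.1.smul_const z, by rw [integral_smul_const, h.2]⟩

theorem map [FiniteDimensional ℝ E] [CompleteSpace F] {f : α → E} {v : E}
    (h : HasIntegralOn f s v μ) (L : E →ₗ[ℝ] F) : HasIntegralOn (fun x => L (f x)) s (L v) μ := by
  have : CompleteSpace E := FiniteDimensional.complete ℝ E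
  exact ⟨L.toContinuousLinearMap.integrable_comp h.1,
    (L.toContinuousLinearMap.integral_comp_comm h.1).trans (congrArg L h.2)⟩

theorem le_of_forall_le {f g : α → ℝ} {v w : ℝ} (hf : HasIntegralOn f s v μ)
    (hg : HasIntegralOn g s w μ) (hs : MeasurableSet s) (hfg : ∀ x ∈ s, f x ≤ g x) : v ≤ w := by
  rw [← hf.2, ← hg.2]
  exact setIntegral_mono_on hf.1 hg.1 hs hfg

end HasIntegralOn

theorem hasIntegralOn_Ioi_of_hasDerivAt_of_nonneg {g g' : ℝ → ℝ} {a l : ℝ}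
    (hderiv : ∀ x ∈ Set.Ici a, HasDerivAt g (g' x) x) (hpos : ∀ x ∈ Set.Ioi a, 0 ≤ g' x)
    (hlim : Filter.Tendsto g Filter.atTop (nhds l)) :
    HasIntegralOn g' (Set.Ioi a) (l - g a) :=
  ⟨integrableOn_Ioi_deriv_of_nonneg' hderiv hpos hlim,
    integral_Ioi_of_hasDerivAt_of_nonneg' hderiv hpos hlim⟩

namespace HasIntegralOn

theorem comp_mul_right_Ioi {f : ℝ → E} {v : E} (h : HasIntegralOn f (Set.Ioi 0) v) {b : ℝ}
    (hb : 0 < b) : HasIntegralOn (fun u => b • f (u * b)) (Set.Ioi 0) v := by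
  simp only [mul_comm _ b]
  constructor
  · exact ((integrableOn_Ioi_comp_mul_left_iff f 0 hb).2 (by rw [mul_zero]; exact h.1)).smul b
  · rw [integral_smul, integral_comp_mul_left_Ioi' f 0 hb, mul_zero, h.2]

theorem comp_inv_Ioi {f : ℝ → E} {v : E} (h : HasIntegralOn f (Set.Ioi 0) v) :
    HasIntegralOn (fun u => (u ^ 2)⁻¹ • f u⁻¹) (Set.Ioi 0) v := by
  have hsubst : Set.EqOn (fun u : ℝ => (|(-1 : ℝ)| * u ^ ((-1 : ℝ) - 1)) • f (u ^ (-1 : ℝ)))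
      (fun u => (u ^ 2)⁻¹ • f u⁻¹) (Set.Ioi 0) := fun u hu => by
    have hexp : (-1 : ℝ) - 1 = -(2 : ℕ) := by norm_num
    simp only [hexp, abs_neg, abs_one, one_mul, Real.rpow_neg (Set.mem_Ioi.1 hu).le,
      Real.rpow_natCast, Real.rpow_one]
  have hpow : HasIntegralOn (fun u : ℝ => (|(-1 : ℝ)| * u ^ ((-1 : ℝ) - 1)) • f (u ^ (-1 : ℝ)))
      (Set.Ioi 0) v :=
    ⟨(integrableOn_Ioi_comp_rpow_iff f (by norm_num)).2 h.1,
      (integral_comp_rpow_Ioi f (by norm_num)).trans h.2⟩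
  exact hpow.congr measurableSet_Ioi hsubst

end HasIntegralOn

end HasIntegralOn

section LogMean

/-- The logarithmic mean `(a - b) / (log a - log b)` of `a` and `b`. The integral form also covers
`a = b` and, with value `0`, the case where `a` or `b` vanishes. -/
noncomputable def logMean (a b : ℝ) : ℝ :=
  ∫ s in (0 : ℝ)..1, a ^ s * b ^ (1 - s)

theorem intervalIntegrable_rpow_mul_rpow_one_sub {a b : ℝ} (ha : 0 ≤ a) (hb : 0 ≤ b) :
    IntervalIntegrable (fun s => a ^ s * b ^ (1 - s)) volume 0 1 := by
  rw [intervalIntegrable_iff_integrableOn_Ioo_of_le zero_le_one]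
  refine Measure.integrableOn_of_bounded (M := a + b) (by simp) (by fun_prop) ?_
  filter_upwards [ae_restrict_mem measurableSet_Ioo] with s ⟨hs₀, hs₁⟩
  rw [Real.norm_of_nonneg (by positivity)]
  calc a ^ s * b ^ (1 - s) ≤ s * a + (1 - s) * b :=
        Real.geom_mean_le_arith_mean2_weighted hs₀.le (sub_pos.2 hs₁).le ha hb (add_sub_cancel s 1)
    _ ≤ a + b := by nlinarith

theorem logMean_eq_zero {a b : ℝ} (h : a = 0 ∨ b = 0) : logMean a b = 0 := by
  rw [logMean, intervalIntegral.integral_of_le zero_le_one, integral_Ioc_eq_integral_Ioo]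
  refine setIntegral_eq_zero_of_forall_eq_zero fun s hs => ?_
  rcases h with rfl | rfl
  · rw [Real.zero_rpow hs.1.ne', zero_mul]
  · rw [Real.zero_rpow (sub_pos.2 hs.2).ne', mul_zero]

theorem logMean_self {a : ℝ} (ha : 0 < a) : logMean a a = a := by
  simp [logMean, ← Real.rpow_add ha]

theorem logMean_mul_log_sub_log {a b : ℝ} (ha : 0 < a) (hb : 0 < b) :
    logMean a b * (Real.log a - Real.log b) = a - b := by
  have hderiv (s : ℝ) : HasDerivAt (fun s => a ^ s * b ^ (1 - s))
      (a ^ s * b ^ (1 - s) * (Real.log a - Real.log b)) s := by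
    refine (((hasDerivAt_id' s).const_rpow ha).mul
      (((hasDerivAt_id' s).const_sub 1).const_rpow hb)).congr_deriv ?_
    ring
  rw [logMean, ← intervalIntegral.integral_mul_const,
    intervalIntegral.integral_eq_sub_of_hasDerivAt (fun s _ => hderiv s)
      ((intervalIntegrable_rpow_mul_rpow_one_sub ha.le hb.le).mul_const _)]
  simp

theorem hasIntegralOn_inv_add_mul_add_self {a : ℝ} (ha : 0 < a) :
    HasIntegralOn (fun τ => ((a + τ) * (a + τ))⁻¹) (Set.Ioi 0) a⁻¹ := by
  have hderiv : ∀ τ ∈ Set.Ici (0 : ℝ),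
      HasDerivAt (fun τ => -(a + τ)⁻¹) ((a + τ) * (a + τ))⁻¹ τ := fun τ (hτ : 0 ≤ τ) => by
    have hne : a + τ ≠ 0 := by positivity
    refine (((hasDerivAt_id' τ).const_add a).inv hne).neg.congr_deriv ?_
    ring
  have hlim : Filter.Tendsto (fun τ => -(a + τ)⁻¹) Filter.atTop (nhds 0) := by
    simpa using (Filter.tendsto_atTop_add_const_left _ a Filter.tendsto_id).inv_tendsto_atTop.neg
  simpa using hasIntegralOn_Ioi_of_hasDerivAt_of_nonneg hderiv
    (fun τ (hτ : 0 < τ) => by positivity) hlim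

theorem hasIntegralOn_inv_add_mul_add_of_ne {a b : ℝ} (ha : 0 < a) (hb : 0 < b) (hab : a ≠ b) :
    HasIntegralOn (fun τ => ((a + τ) * (b + τ))⁻¹) (Set.Ioi 0)
      ((Real.log a - Real.log b) / (a - b)) := by
  have hba : b - a ≠ 0 := sub_ne_zero.2 hab.symm
  have hderiv : ∀ τ ∈ Set.Ici (0 : ℝ),
      HasDerivAt (fun τ => (Real.log (τ + a) - Real.log (τ + b)) / (b - a))
        ((a + τ) * (b + τ))⁻¹ τ := fun τ (hτ : 0 ≤ τ) => by
    have hτa : τ + a ≠ 0 := by positivity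
    have hτb : τ + b ≠ 0 := by positivity
    refine ((((hasDerivAt_id' τ).add_const a).log hτa).sub
      (((hasDerivAt_id' τ).add_const b).log hτb) |>.div_const (b - a)).congr_deriv ?_
    rw [add_comm a, add_comm b]
    field_simp
    ring
  have hlim : Filter.Tendsto (fun τ => (Real.log (τ + a) - Real.log (τ + b)) / (b - a))
      Filter.atTop (nhds 0) := by
    simpa using ((Real.tendsto_log_comp_add_sub_log a).sub
      (Real.tendsto_log_comp_add_sub_log b)).div_const (b - a)
  convert hasIntegralOn_Ioi_of_hasDerivAt_of_nonneg hderiv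
    (fun τ (hτ : 0 < τ) => by positivity) hlim using 1
  rw [zero_add, zero_add, zero_sub, ← neg_sub b a, div_neg]

theorem hasIntegralOn_inv_add_mul_add {a b : ℝ} (ha : 0 < a) (hb : 0 < b) :
    HasIntegralOn (fun τ => ((a + τ) * (b + τ))⁻¹) (Set.Ioi 0) (logMean a b)⁻¹ := by
  rcases eq_or_ne a b with rfl | hab
  · rw [logMean_self ha]
    exact hasIntegralOn_inv_add_mul_add_self ha
  · rw [eq_div_of_mul_eq (sub_ne_zero.2 (Real.log_injOn_pos.ne ha hb hab))
      (logMean_mul_log_sub_log ha hb), inv_div]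
    exact hasIntegralOn_inv_add_mul_add_of_ne ha hb hab

theorem hasIntegralOn_inv_add_mul_mul_one_add {a b : ℝ} (ha : 0 < a) (hb : 0 < b) :
    HasIntegralOn (fun u => (1 + u)⁻¹ * (a + u * b)⁻¹) (Set.Ioi 0) (logMean a b)⁻¹ :=
  ((hasIntegralOn_inv_add_mul_add ha hb).comp_mul_right_Ioi hb).congr measurableSet_Ioi
    fun u (hu : 0 < u) => by
      simp only [smul_eq_mul]
      field_simp

theorem hasIntegralOn_sq_logMean_div {a b : ℝ} (ha : 0 ≤ a) (hb : 0 ≤ b) :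
    HasIntegralOn (fun u => (1 + u)⁻¹ * (logMean a b ^ 2 / (a + u * b))) (Set.Ioi 0)
      (logMean a b) := by
  by_cases hmean : logMean a b = 0
  · simp [hmean, HasIntegralOn]
  · obtain ⟨ha₀, hb₀⟩ := not_or.1 (mt logMean_eq_zero hmean)
    have h := (hasIntegralOn_inv_add_mul_mul_one_add (ha.lt_of_ne' ha₀)
      (hb.lt_of_ne' hb₀)).const_mul (logMean a b ^ 2)
    convert h using 1
    · funext u; ring
    · field_simp

end LogMean

open scoped Matrix.Norms.Elementwise

section MatrixIntegral

variable {α : Type*} [MeasurableSpace α] {μ : Measure α} {s : Set α}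

namespace HasIntegralOn

theorem of_entry {m n : Type*} [Fintype m] [Fintype n] {F : α → Matrix m n ℂ} {M : Matrix m n ℂ}
    (h : ∀ i j, HasIntegralOn (fun x => F x i j) s (M i j) μ) : HasIntegralOn F s M μ := by
  have hrow (i : m) : IntegrableOn (fun x => F x i) s μ := Integrable.of_eval fun j => (h i j).1
  refine ⟨Integrable.of_eval hrow, ?_⟩
  ext i j
  calc (∫ x in s, F x ∂μ) i j = (∫ x in s, F x i ∂μ) j := congrFun (eval_integral hrow i) j
    _ = ∫ x in s, F x i j ∂μ := eval_integral (fun j => (h i j).1) j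
    _ = M i j := (h i j).2

theorem entry {m n : Type*} [Fintype m] [Fintype n] {F : α → Matrix m n ℂ} {M : Matrix m n ℂ}
    (h : HasIntegralOn F s M μ) (i : m) (j : n) : HasIntegralOn (fun x => F x i j) s (M i j) μ :=
  h.map (Matrix.entryLinearMap ℝ ℂ i j)

theorem sum_re_star_mul {m n : Type*} [Fintype m] [Fintype n] {c : α → ℝ} {F : α → Matrix m n ℂ}
    {M : Matrix m n ℂ} (h : HasIntegralOn (fun x => c x • F x) s M μ) (w : m → n → ℝ) :
    HasIntegralOn (fun x => c x * ∑ i, ∑ j, w i j * (star (M i j) * F x i j).re) s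
      (∑ i, ∑ j, w i j * Complex.normSq (M i j)) μ := by
  let L : Matrix m n ℂ →ₗ[ℝ] ℝ := ∑ i, ∑ j,
    w i j • (Complex.reLm ∘ₗ LinearMap.mulLeft ℝ (star (M i j)) ∘ₗ entryLinearMap ℝ ℂ i j)
  have hL (N : Matrix m n ℂ) : L N = ∑ i, ∑ j, w i j * (star (M i j) * N i j).re := by
    simp [L, LinearMap.sum_apply]
  have hLM : L M = ∑ i, ∑ j, w i j * Complex.normSq (M i j) := by
    simp only [hL, Complex.star_def, ← Complex.normSq_eq_conj_mul_self, Complex.ofReal_re]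
  have hLsmul (x : α) :
      L (c x • F x) = c x * ∑ i, ∑ j, w i j * (star (M i j) * F x i j).re := by
    rw [map_smul, hL, smul_eq_mul]
  simpa only [hLM, hLsmul] using h.map L

end HasIntegralOn

variable {ι : Type*} [Fintype ι] [DecidableEq ι]

theorem conjStarAlgAut_real_smul (U : unitaryGroup ι ℂ) (r : ℝ) (M : Matrix ι ι ℂ) :
    Unitary.conjStarAlgAut ℂ _ U (r • M) = r • Unitary.conjStarAlgAut ℂ _ U M := by
  rw [← Complex.coe_smul, map_smul, Complex.coe_smul]

theorem HasIntegralOn.conj {F : α → Matrix ι ι ℂ} {M : Matrix ι ι ℂ} (h : HasIntegralOn F s M μ)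
    (U : unitaryGroup ι ℂ) :
    HasIntegralOn (fun x => Unitary.conjStarAlgAut ℂ _ U (F x)) s
      (Unitary.conjStarAlgAut ℂ _ U M) μ :=
  h.map (LinearMap.mulLeftRight ℝ ((U : Matrix ι ι ℂ), star (U : Matrix ι ι ℂ)))

end MatrixIntegral

section InverseCubic

theorem integrableOn_inv_add_mul_add_mul_add {a b c : ℝ} (ha : 0 < a) (hb : 0 < b) (hc : 0 < c) :
    IntegrableOn (fun τ => ((a + τ) * (b + τ) * (c + τ))⁻¹) (Set.Ioi 0) := by
  refine Integrable.mono' ((hasIntegralOn_inv_add_mul_add ha hb).1.mul_const c⁻¹)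
    (by fun_prop) ?_
  filter_upwards [ae_restrict_mem measurableSet_Ioi] with τ (hτ : 0 < τ)
  rw [Real.norm_of_nonneg (by positivity), mul_inv]
  gcongr
  linarith

/-- The scalar integral `∫₀^∞ ((a + τ) (b + τ) (c + τ))⁻¹ dτ`, which weights the entries of
the matrix integral `resolventIntegral₃ A C` at a diagonal `A`. -/
noncomputable def inverseCubicIntegral (a b c : ℝ) : ℝ :=
  ∫ τ in Set.Ioi (0 : ℝ), ((a + τ) * (b + τ) * (c + τ))⁻¹

theorem hasIntegralOn_inverseCubicIntegral {a b c : ℝ} (ha : 0 < a) (hb : 0 < b) (hc : 0 < c) :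
    HasIntegralOn (fun τ => ((a + τ) * (b + τ) * (c + τ))⁻¹) (Set.Ioi 0)
      (inverseCubicIntegral a b c) :=
  ⟨integrableOn_inv_add_mul_add_mul_add ha hb hc, rfl⟩

theorem hasIntegralOn_inv_mul_inv_inverseCubicIntegral {a b c : ℝ}
    (ha : 0 < a) (hb : 0 < b) (hc : 0 < c) :
    HasIntegralOn (fun u => (1 + u)⁻¹ * ((a + u * b)⁻¹ * (c + u * b)⁻¹)) (Set.Ioi 0)
      (inverseCubicIntegral a b c) :=
  ((hasIntegralOn_inverseCubicIntegral ha hb hc).comp_mul_right_Ioi hb).congr measurableSet_Ioi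
    fun u (hu : 0 < u) => by
      simp only [smul_eq_mul]
      field_simp

theorem hasIntegralOn_mul_inv_mul_inv_inverseCubicIntegral {a b c : ℝ}
    (ha : 0 < a) (hb : 0 < b) (hc : 0 < c) :
    HasIntegralOn (fun u => (1 + u)⁻¹ * (u * ((b + u * a)⁻¹ * (b + u * c)⁻¹))) (Set.Ioi 0)
      (inverseCubicIntegral a b c) :=
  (hasIntegralOn_inv_mul_inv_inverseCubicIntegral ha hb hc).comp_inv_Ioi.congr measurableSet_Ioi
    fun u (hu : 0 < u) => by
      simp only [smul_eq_mul]
      field_simp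
      ring

end InverseCubic

section Sylvester

variable {ι : Type*}

/-- The solution `Y` of the Sylvester equation `D Y + u Y D = C`, where `D` is the diagonal matrix
with entries `a`. -/
noncomputable def sylvesterSolution (a : ι → ℝ) (C : Matrix ι ι ℂ) (u : ℝ) : Matrix ι ι ℂ :=
  Matrix.of fun i j => (a i + u * a j)⁻¹ • C i j

/-- `resolventIntegral₂ D C` for the positive diagonal matrix `D` with entries `a`. -/
noncomputable def diagonalResolventIntegral₂ (a : ι → ℝ) (C : Matrix ι ι ℂ) : Matrix ι ι ℂ :=
  Matrix.of fun i j => (logMean (a i) (a j))⁻¹ • C i j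

variable [Fintype ι]

/-- The weighted sum `Y Yᴴ + u Yᴴ Y` of the two Gram matrices of `Y`. -/
noncomputable def weightedGram (u : ℝ) (Y : Matrix ι ι ℂ) : Matrix ι ι ℂ :=
  Y * Yᴴ + u • (Yᴴ * Y)

theorem conjStarAlgAut_weightedGram [DecidableEq ι] (U : unitaryGroup ι ℂ) (u : ℝ)
    (Y : Matrix ι ι ℂ) :
    Unitary.conjStarAlgAut ℂ _ U (weightedGram u Y) =
      weightedGram u (Unitary.conjStarAlgAut ℂ _ U Y) := by
  simp only [weightedGram, ← star_eq_conjTranspose, conjStarAlgAut_real_smul, map_add, map_mul,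
    map_star]

/-- `resolventIntegral₃ D C` for the positive diagonal matrix `D` with entries `a`. -/
noncomputable def diagonalResolventIntegral₃ (a : ι → ℝ) (C : Matrix ι ι ℂ) : Matrix ι ι ℂ :=
  Matrix.of fun i k => ∑ j, inverseCubicIntegral (a i) (a j) (a k) • (C i j * C j k)

variable {a : ι → ℝ}

theorem hasIntegralOn_sylvesterSolution (ha : ∀ i, 0 < a i) (C : Matrix ι ι ℂ) :
    HasIntegralOn (fun u => (1 + u)⁻¹ • sylvesterSolution a C u) (Set.Ioi 0)
      (diagonalResolventIntegral₂ a C) :=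
  .of_entry fun i j =>
    ((hasIntegralOn_inv_add_mul_mul_one_add (ha i) (ha j)).smul_const (C i j)).congr
      measurableSet_Ioi fun _ _ => mul_smul _ _ _

theorem hasIntegralOn_sylvesterSolution_mul_conjTranspose (ha : ∀ i, 0 < a i) {C : Matrix ι ι ℂ}
    (hC : C.IsHermitian) :
    HasIntegralOn (fun u => (1 + u)⁻¹ • (sylvesterSolution a C u * (sylvesterSolution a C u)ᴴ))
      (Set.Ioi 0) (diagonalResolventIntegral₃ a C) := by
  refine .of_entry fun i k => (HasIntegralOn.sum fun j (_ : j ∈ univ) =>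
    (hasIntegralOn_inv_mul_inv_inverseCubicIntegral (ha i) (ha j) (ha k)).smul_const
      (C i j * C j k)).congr measurableSet_Ioi fun u _ => ?_
  simp only [sylvesterSolution, Matrix.smul_apply, mul_apply, conjTranspose_apply, of_apply,
    star_smul, hC.apply, star_trivial, smul_mul_smul_comm, smul_sum, smul_smul]

theorem hasIntegralOn_conjTranspose_mul_sylvesterSolution (ha : ∀ i, 0 < a i) {C : Matrix ι ι ℂ}
    (hC : C.IsHermitian) :
    HasIntegralOn
      (fun u => (1 + u)⁻¹ • (u • ((sylvesterSolution a C u)ᴴ * sylvesterSolution a C u)))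
      (Set.Ioi 0) (diagonalResolventIntegral₃ a C) := by
  refine .of_entry fun i k => (HasIntegralOn.sum fun j (_ : j ∈ univ) =>
    (hasIntegralOn_mul_inv_mul_inv_inverseCubicIntegral (ha i) (ha j) (ha k)).smul_const
      (C i j * C j k)).congr measurableSet_Ioi fun u _ => ?_
  simp only [sylvesterSolution, Matrix.smul_apply, mul_apply, conjTranspose_apply, of_apply,
    star_smul, hC.apply, star_trivial, smul_mul_smul_comm, smul_sum, smul_smul]

theorem hasIntegralOn_weightedGram_sylvesterSolution (ha : ∀ i, 0 < a i) {C : Matrix ι ι ℂ}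
    (hC : C.IsHermitian) :
    HasIntegralOn (fun u => (1 + u)⁻¹ • weightedGram u (sylvesterSolution a C u)) (Set.Ioi 0)
      ((2 : ℝ) • diagonalResolventIntegral₃ a C) := by
  rw [two_smul]
  exact ((hasIntegralOn_sylvesterSolution_mul_conjTranspose ha hC).add
    (hasIntegralOn_conjTranspose_mul_sylvesterSolution ha hC)).congr measurableSet_Ioi
    fun _ _ => (smul_add _ _ _).symm

end Sylvester

section Resolvent

variable {ι : Type*} [DecidableEq ι]

/-- The resolvent `(D + τ)⁻¹` of the diagonal matrix `D` with entries `a`. -/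
noncomputable def diagonalResolvent (a : ι → ℝ) (τ : ℝ) : Matrix ι ι ℂ :=
  diagonal fun i => (((a i + τ)⁻¹ : ℝ) : ℂ)

variable [Fintype ι]

/-- The integral `∫₀^∞ (A + τ)⁻¹ C (A + τ)⁻¹ dτ`, which represents the derivative of the matrix
logarithm at `A` in the direction `C`. -/
noncomputable def resolventIntegral₂ (A C : Matrix ι ι ℂ) : Matrix ι ι ℂ :=
  ∫ τ in Set.Ioi (0 : ℝ), (A + (τ : ℂ) • 1)⁻¹ * C * (A + (τ : ℂ) • 1)⁻¹

/-- The integral `∫₀^∞ (A + τ)⁻¹ C (A + τ)⁻¹ C (A + τ)⁻¹ dτ`, which represents `-1/2` times the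
second derivative of the matrix logarithm at `A` in the direction `C`. -/
noncomputable def resolventIntegral₃ (A C : Matrix ι ι ℂ) : Matrix ι ι ℂ :=
  ∫ τ in Set.Ioi (0 : ℝ),
    (A + (τ : ℂ) • 1)⁻¹ * C * (A + (τ : ℂ) • 1)⁻¹ * C * (A + (τ : ℂ) • 1)⁻¹

theorem exists_eq_conjStarAlgAut_diagonal {A : Matrix ι ι ℂ} (hA : A.PosDef) :
    ∃ (U : unitaryGroup ι ℂ) (a : ι → ℝ), (∀ i, 0 < a i) ∧
      A = Unitary.conjStarAlgAut ℂ _ U (diagonal fun i => (a i : ℂ)) :=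
  ⟨hA.isHermitian.eigenvectorUnitary, hA.isHermitian.eigenvalues, hA.eigenvalues_pos,
    hA.isHermitian.spectral_theorem⟩

theorem inv_conjStarAlgAut_diagonal_add_smul_one (U : unitaryGroup ι ℂ) {a : ι → ℝ} {τ : ℝ}
    (h : ∀ i, a i + τ ≠ 0) :
    (Unitary.conjStarAlgAut ℂ _ U (diagonal fun i => (a i : ℂ)) + (τ : ℂ) • 1)⁻¹ =
      Unitary.conjStarAlgAut ℂ _ U (diagonalResolvent a τ) := by
  have hshift : Unitary.conjStarAlgAut ℂ _ U (diagonal fun i => (a i : ℂ)) + (τ : ℂ) • 1 =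
      Unitary.conjStarAlgAut ℂ _ U (diagonal fun i => ((a i + τ : ℝ) : ℂ)) := by
    rw [← map_one (Unitary.conjStarAlgAut ℂ (Matrix ι ι ℂ) U), ← map_smul, ← map_add,
      smul_one_eq_diagonal, diagonal_add]
    simp only [Complex.ofReal_add]
  have hinv : (diagonal fun i => ((a i + τ : ℝ) : ℂ)) * diagonalResolvent a τ = 1 := by
    simp only [diagonalResolvent, diagonal_mul_diagonal, ← Complex.ofReal_mul,
      mul_inv_cancel₀ (h _), Complex.ofReal_one, diagonal_one]
  rw [hshift]
  exact inv_eq_right_inv (by rw [← map_mul, hinv, map_one])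

variable {a : ι → ℝ}

theorem hasIntegralOn_diagonalResolventIntegral₂ (ha : ∀ i, 0 < a i) (C : Matrix ι ι ℂ) :
    HasIntegralOn (fun τ => diagonalResolvent a τ * C * diagonalResolvent a τ) (Set.Ioi 0)
      (diagonalResolventIntegral₂ a C) := by
  refine .of_entry fun i j =>
    ((hasIntegralOn_inv_add_mul_add (ha i) (ha j)).smul_const (C i j)).congr
      measurableSet_Ioi fun τ _ => ?_
  simp only [diagonalResolvent, mul_diagonal, diagonal_mul, Complex.real_smul, mul_inv,
    Complex.ofReal_mul]
  ring

theorem hasIntegralOn_diagonalResolventIntegral₃ (ha : ∀ i, 0 < a i) (C : Matrix ι ι ℂ) :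
    HasIntegralOn (fun τ => diagonalResolvent a τ * C * diagonalResolvent a τ * C *
      diagonalResolvent a τ) (Set.Ioi 0) (diagonalResolventIntegral₃ a C) := by
  refine .of_entry fun i k => (HasIntegralOn.sum fun j (_ : j ∈ univ) =>
    (hasIntegralOn_inverseCubicIntegral (ha i) (ha j) (ha k)).smul_const
      (C i j * C j k)).congr measurableSet_Ioi fun τ _ => ?_
  rw [diagonalResolvent, mul_diagonal, mul_apply, sum_mul]
  refine sum_congr rfl fun j _ => ?_
  rw [mul_diagonal, diagonal_mul, Complex.real_smul, mul_inv, mul_inv, Complex.ofReal_mul,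
    Complex.ofReal_mul]
  ring

theorem hasIntegralOn_conjStarAlgAut_resolvent₂ (U : unitaryGroup ι ℂ) (ha : ∀ i, 0 < a i)
    (C : Matrix ι ι ℂ) :
    let φ := Unitary.conjStarAlgAut ℂ (Matrix ι ι ℂ) U
    let A := φ (diagonal fun i => (a i : ℂ))
    HasIntegralOn (fun τ : ℝ => (A + (τ : ℂ) • 1)⁻¹ * φ C * (A + (τ : ℂ) • 1)⁻¹) (Set.Ioi 0)
      (φ (diagonalResolventIntegral₂ a C)) :=
  ((hasIntegralOn_diagonalResolventIntegral₂ ha C).conj U).congr measurableSet_Ioi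
    fun τ (hτ : 0 < τ) => by
      simp only [inv_conjStarAlgAut_diagonal_add_smul_one U fun i => (add_pos (ha i) hτ).ne',
        map_mul]

theorem hasIntegralOn_conjStarAlgAut_resolvent₃ (U : unitaryGroup ι ℂ) (ha : ∀ i, 0 < a i)
    (C : Matrix ι ι ℂ) :
    let φ := Unitary.conjStarAlgAut ℂ (Matrix ι ι ℂ) U
    let A := φ (diagonal fun i => (a i : ℂ))
    HasIntegralOn (fun τ : ℝ => (A + (τ : ℂ) • 1)⁻¹ * φ C * (A + (τ : ℂ) • 1)⁻¹ * φ C *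
      (A + (τ : ℂ) • 1)⁻¹) (Set.Ioi 0) (φ (diagonalResolventIntegral₃ a C)) :=
  ((hasIntegralOn_diagonalResolventIntegral₃ ha C).conj U).congr measurableSet_Ioi
    fun τ (hτ : 0 < τ) => by
      simp only [inv_conjStarAlgAut_diagonal_add_smul_one U fun i => (add_pos (ha i) hτ).ne',
        map_mul]

theorem hasIntegralOn_resolventIntegral₂ {A : Matrix ι ι ℂ} (hA : A.PosDef) (C : Matrix ι ι ℂ) :
    HasIntegralOn (fun τ : ℝ => (A + (τ : ℂ) • 1)⁻¹ * C * (A + (τ : ℂ) • 1)⁻¹) (Set.Ioi 0)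
      (resolventIntegral₂ A C) := by
  obtain ⟨U, a, ha, rfl⟩ := exists_eq_conjStarAlgAut_diagonal hA
  obtain ⟨C, rfl⟩ := EquivLike.surjective (Unitary.conjStarAlgAut ℂ _ U) C
  exact ⟨(hasIntegralOn_conjStarAlgAut_resolvent₂ U ha C).1, rfl⟩

theorem hasIntegralOn_resolventIntegral₃ {A : Matrix ι ι ℂ} (hA : A.PosDef) (C : Matrix ι ι ℂ) :
    HasIntegralOn (fun τ : ℝ => (A + (τ : ℂ) • 1)⁻¹ * C * (A + (τ : ℂ) • 1)⁻¹ * C *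
      (A + (τ : ℂ) • 1)⁻¹) (Set.Ioi 0) (resolventIntegral₃ A C) := by
  obtain ⟨U, a, ha, rfl⟩ := exists_eq_conjStarAlgAut_diagonal hA
  obtain ⟨C, rfl⟩ := EquivLike.surjective (Unitary.conjStarAlgAut ℂ _ U) C
  exact ⟨(hasIntegralOn_conjStarAlgAut_resolvent₃ U ha C).1, rfl⟩

theorem isHermitian_resolventIntegral₂ {A C : Matrix ι ι ℂ} (hA : A.PosDef)
    (hC : C.IsHermitian) : (resolventIntegral₂ A C).IsHermitian := by
  have hresolvent (τ : ℝ) : (A + (τ : ℂ) • 1)⁻¹.IsHermitian :=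
    (hA.isHermitian.add (isHermitian_one.smul (Complex.conj_ofReal τ))).inv
  have hstar := (hasIntegralOn_resolventIntegral₂ hA C).map
    (conjTransposeLinearEquiv ι ι ℝ ℂ).toLinearMap
  refine hstar.2.symm.trans (setIntegral_congr_fun measurableSet_Ioi fun τ _ => ?_)
  have h := isHermitian_mul_mul_conjTranspose (A + (τ : ℂ) • 1)⁻¹ hC
  rw [(hresolvent τ).eq] at h
  exact h

theorem exists_hasIntegralOn_resolventIntegral {A C : Matrix ι ι ℂ} (hA : A.PosDef)
    (hC : C.IsHermitian) :
    ∃ Y : ℝ → Matrix ι ι ℂ,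
      HasIntegralOn (fun u => (1 + u)⁻¹ • Y u) (Set.Ioi 0) (resolventIntegral₂ A C) ∧
      HasIntegralOn (fun u => (1 + u)⁻¹ • weightedGram u (Y u)) (Set.Ioi 0)
        ((2 : ℝ) • resolventIntegral₃ A C) := by
  obtain ⟨U, a, ha, rfl⟩ := exists_eq_conjStarAlgAut_diagonal hA
  obtain ⟨C, rfl⟩ := EquivLike.surjective (Unitary.conjStarAlgAut ℂ _ U) C
  have hC' : C.IsHermitian := EquivLike.injective (Unitary.conjStarAlgAut ℂ _ U) <| by
    rw [← star_eq_conjTranspose, map_star]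
    exact hC
  refine ⟨fun u => Unitary.conjStarAlgAut ℂ _ U (sylvesterSolution a C u), ?_, ?_⟩
  · rw [resolventIntegral₂, (hasIntegralOn_conjStarAlgAut_resolvent₂ U ha C).2]
    exact ((hasIntegralOn_sylvesterSolution ha C).conj U).congr measurableSet_Ioi
      fun _ _ => conjStarAlgAut_real_smul U _ _
  · rw [resolventIntegral₃, (hasIntegralOn_conjStarAlgAut_resolvent₃ U ha C).2,
      ← conjStarAlgAut_real_smul]
    exact ((hasIntegralOn_weightedGram_sylvesterSolution ha hC').conj U).congr measurableSet_Ioi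
      fun u _ => by simp only [conjStarAlgAut_real_smul, conjStarAlgAut_weightedGram]

end Resolvent

section TraceInequality

variable {ι : Type*} [Fintype ι] [DecidableEq ι]

theorem two_mul_re_star_mul_le {m x : ℝ} (hx : 0 ≤ x) (hm : x = 0 → m = 0) (t y : ℂ) :
    2 * m * (star t * y).re ≤ x * Complex.normSq y + m ^ 2 / x * Complex.normSq t := by
  rcases hx.eq_or_lt' with rfl | hx
  · simp [hm rfl]
  have hsq : 0 ≤ x * Complex.normSq (y - (m / x : ℝ) * t) :=
    mul_nonneg hx.le (Complex.normSq_nonneg _)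
  have hexpand : x * Complex.normSq (y - (m / x : ℝ) * t) =
      x * Complex.normSq y + m ^ 2 / x * Complex.normSq t - 2 * m * (star t * y).re := by
    simp only [Complex.normSq_apply, Complex.sub_re, Complex.sub_im, Complex.mul_re, Complex.mul_im,
      Complex.ofReal_re, Complex.ofReal_im, Complex.star_def, Complex.conj_re, Complex.conj_im]
    field_simp
    ring
  linarith

theorem re_trace_conjTranspose_mul_diagonal_mul_mul_diagonal (p q : ι → ℝ) (M : Matrix ι ι ℂ) :
    (trace (Mᴴ * (diagonal fun k => (p k : ℂ)) * M * (diagonal fun k => (q k : ℂ)))).re =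
      ∑ k, ∑ l, p k * q l * Complex.normSq (M k l) := by
  rw [sum_comm, trace, Complex.re_sum]
  refine sum_congr rfl fun l _ => ?_
  rw [diag_apply, mul_diagonal, mul_apply, sum_mul, Complex.re_sum]
  refine sum_congr rfl fun k _ => ?_
  rw [mul_diagonal, conjTranspose_apply, Complex.normSq_apply]
  simp only [Complex.mul_re, Complex.mul_im, Complex.ofReal_re, Complex.ofReal_im,
    Complex.star_def, Complex.conj_re, Complex.conj_im]
  ring

theorem re_trace_weightedGram_mul_diagonal (b : ι → ℝ) (u : ℝ) (Y : Matrix ι ι ℂ) :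
    (trace (weightedGram u Y * diagonal fun k => (b k : ℂ))).re =
      ∑ k, ∑ l, (b k + u * b l) * Complex.normSq (Y k l) := by
  have hleft := re_trace_conjTranspose_mul_diagonal_mul_mul_diagonal b 1 Y
  have hright := re_trace_conjTranspose_mul_diagonal_mul_mul_diagonal 1 b Y
  simp only [Pi.one_apply, Complex.ofReal_one, diagonal_one, mul_one, one_mul] at hleft hright
  rw [trace_mul_cycle] at hleft
  rw [weightedGram, add_mul, smul_mul_assoc, trace_add, trace_smul, Complex.add_re,
    Complex.smul_re, hleft, hright, smul_eq_mul]
  simp only [add_mul, sum_add_distrib, mul_sum, mul_assoc]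

theorem integral_re_trace_diagonal_rpow {b : ι → ℝ} (hb : ∀ k, 0 ≤ b k) (T : Matrix ι ι ℂ) :
    ∫ s in (0 : ℝ)..1, (trace (Tᴴ * (diagonal fun k => ((b k ^ s : ℝ) : ℂ)) * T *
        diagonal fun k => ((b k ^ (1 - s) : ℝ) : ℂ))).re =
      ∑ k, ∑ l, logMean (b k) (b l) * Complex.normSq (T k l) := by
  have hint (k l : ι) := (intervalIntegrable_rpow_mul_rpow_one_sub (hb k) (hb l)).mul_const
    (Complex.normSq (T k l))
  simp_rw [re_trace_conjTranspose_mul_diagonal_mul_mul_diagonal]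
  rw [intervalIntegral.integral_finsetSum fun k _ => by
    simpa only [sum_fn] using IntervalIntegrable.sum univ fun l _ => hint k l]
  refine sum_congr rfl fun k _ => ?_
  rw [intervalIntegral.integral_finsetSum fun l _ => hint k l]
  simp_rw [intervalIntegral.integral_mul_const, logMean]

theorem sum_two_mul_re_le_re_trace_weightedGram_add {b : ι → ℝ} (hb : ∀ k, 0 ≤ b k) {u : ℝ}
    (hu : 0 < u) (T Y : Matrix ι ι ℂ) :
    ∑ k, ∑ l, 2 * logMean (b k) (b l) * (star (T k l) * Y k l).re ≤
      (trace (weightedGram u Y * diagonal fun k => (b k : ℂ))).re +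
        ∑ k, ∑ l, logMean (b k) (b l) ^ 2 / (b k + u * b l) * Complex.normSq (T k l) := by
  rw [re_trace_weightedGram_mul_diagonal]
  simp only [← sum_add_distrib]
  refine sum_le_sum fun k _ => sum_le_sum fun l _ => ?_
  have hbl : 0 ≤ u * b l := mul_nonneg hu.le (hb l)
  exact two_mul_re_star_mul_le (add_nonneg (hb k) hbl)
    (fun h => logMean_eq_zero (Or.inl ((add_eq_zero_iff_of_nonneg (hb k) hbl).1 h).1)) _ _

theorem sum_logMean_mul_normSq_le {b : ι → ℝ} (hb : ∀ k, 0 ≤ b k) {Y : ℝ → Matrix ι ι ℂ}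
    {T R : Matrix ι ι ℂ} (hT : HasIntegralOn (fun u => (1 + u)⁻¹ • Y u) (Set.Ioi 0) T)
    (hR : HasIntegralOn (fun u => (1 + u)⁻¹ • weightedGram u (Y u)) (Set.Ioi 0) R) :
    ∑ k, ∑ l, logMean (b k) (b l) * Complex.normSq (T k l) ≤
      (trace (R * diagonal fun k => (b k : ℂ))).re := by
  have hpairing := hT.sum_re_star_mul fun k l => 2 * logMean (b k) (b l)
  have hform : HasIntegralOn
      (fun u => (1 + u)⁻¹ * (trace (weightedGram u (Y u) * diagonal fun k => (b k : ℂ))).re)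
      (Set.Ioi 0) (trace (R * diagonal fun k => (b k : ℂ))).re := by
    let L : Matrix ι ι ℂ →ₗ[ℝ] ℝ := Complex.reLm ∘ₗ traceLinearMap ι ℝ ℂ ∘ₗ
      LinearMap.mulRight ℝ (diagonal fun k => (b k : ℂ))
    exact (hR.map L).congr measurableSet_Ioi fun u _ => map_smul L _ _
  have hcost : HasIntegralOn (fun u => (1 + u)⁻¹ *
        ∑ k, ∑ l, logMean (b k) (b l) ^ 2 / (b k + u * b l) * Complex.normSq (T k l))
      (Set.Ioi 0) (∑ k, ∑ l, logMean (b k) (b l) * Complex.normSq (T k l)) :=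
    (HasIntegralOn.sum fun k (_ : k ∈ univ) => HasIntegralOn.sum fun l (_ : l ∈ univ) =>
      (hasIntegralOn_sq_logMean_div (hb k) (hb l)).smul_const (Complex.normSq (T k l))).congr
      measurableSet_Ioi fun u _ => by simp only [mul_sum, smul_eq_mul, mul_assoc]
  have hbound := hpairing.le_of_forall_le (hform.add hcost) measurableSet_Ioi
    fun u (hu : 0 < u) => by
      rw [← mul_add]
      exact mul_le_mul_of_nonneg_left (sum_two_mul_re_le_re_trace_weightedGram_add hb hu T (Y u))
        (by positivity)
  simp only [mul_assoc, ← mul_sum] at hbound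
  linarith

theorem trace_conjStarAlgAut (U : unitaryGroup ι ℂ) (M : Matrix ι ι ℂ) :
    trace (Unitary.conjStarAlgAut ℂ _ U M) = trace M := by
  rw [Unitary.conjStarAlgAut_apply, trace_mul_cycle, Unitary.coe_star_mul_self, one_mul]

end TraceInequality

theorem conjStarAlgAut_star_eigenvectorUnitary_matRpow {n : ℕ} {B : Matrix (Fin n) (Fin n) ℂ}
    (hB : B.IsHermitian) (s : ℝ) :
    Unitary.conjStarAlgAut ℂ _ (star hB.eigenvectorUnitary) (matRpow B s) =
      diagonal fun i => ((hB.eigenvalues i ^ s : ℝ) : ℂ) := by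
  have hpow : matRpow B s = Unitary.conjStarAlgAut ℂ _ hB.eigenvectorUnitary
      (diagonal fun i => ((hB.eigenvalues i ^ s : ℝ) : ℂ)) := dif_pos hB
  rw [hpow, ← Unitary.conjStarAlgAut_symm, StarAlgEquiv.symm_apply_apply]

theorem integral_re_trace_matRpow_le {n : ℕ} {B : Matrix (Fin n) (Fin n) ℂ} (hB : B.PosSemidef)
    {Y : ℝ → Matrix (Fin n) (Fin n) ℂ} {T R : Matrix (Fin n) (Fin n) ℂ}
    (hT : HasIntegralOn (fun u => (1 + u)⁻¹ • Y u) (Set.Ioi 0) T)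
    (hR : HasIntegralOn (fun u => (1 + u)⁻¹ • weightedGram u (Y u)) (Set.Ioi 0) R) :
    ∫ s in (0 : ℝ)..1, (trace (Tᴴ * matRpow B s * T * matRpow B (1 - s))).re ≤
      (trace (R * B)).re := by
  let V := star hB.isHermitian.eigenvectorUnitary
  let φ := Unitary.conjStarAlgAut ℂ (Matrix (Fin n) (Fin n) ℂ) V
  let b := hB.isHermitian.eigenvalues
  have hφB : φ B = diagonal fun k => (b k : ℂ) :=
    hB.isHermitian.conjStarAlgAut_star_eigenvectorUnitary
  have hφpow (s : ℝ) : φ (matRpow B s) = diagonal fun k => ((b k ^ s : ℝ) : ℂ) :=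
    conjStarAlgAut_star_eigenvectorUnitary_matRpow hB.isHermitian s
  have hφT : HasIntegralOn (fun u => (1 + u)⁻¹ • φ (Y u)) (Set.Ioi 0) (φ T) :=
    (hT.conj V).congr measurableSet_Ioi fun _ _ => conjStarAlgAut_real_smul V _ _
  have hφR : HasIntegralOn (fun u => (1 + u)⁻¹ • weightedGram u (φ (Y u))) (Set.Ioi 0) (φ R) :=
    (hR.conj V).congr measurableSet_Ioi fun _ _ => by
      simp only [conjStarAlgAut_real_smul, conjStarAlgAut_weightedGram, φ]
  calc ∫ s in (0 : ℝ)..1, (trace (Tᴴ * matRpow B s * T * matRpow B (1 - s))).re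
      = ∫ s in (0 : ℝ)..1, (trace ((φ T)ᴴ * (diagonal fun k => ((b k ^ s : ℝ) : ℂ)) * φ T *
          diagonal fun k => ((b k ^ (1 - s) : ℝ) : ℂ))).re := by
        simp only [← star_eq_conjTranspose, ← hφpow, ← map_star, ← map_mul, φ,
          trace_conjStarAlgAut]
    _ = ∑ k, ∑ l, logMean (b k) (b l) * Complex.normSq (φ T k l) :=
        integral_re_trace_diagonal_rpow hB.eigenvalues_nonneg _
    _ ≤ (trace (φ R * diagonal fun k => (b k : ℂ))).re :=
        sum_logMean_mul_normSq_le hB.eigenvalues_nonneg hφT hφR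
    _ = (trace (R * B)).re := by rw [← hφB, ← map_mul, trace_conjStarAlgAut]

/-- Lieb's lemma: with `T = ∫₀^∞ (A+τI)⁻¹ C (A+τI)⁻¹ dτ` and
`R = 2∫₀^∞ (A+τI)⁻¹ C (A+τI)⁻¹ C (A+τI)⁻¹ dτ`, for every Hermitian positive
semi-definite `B` one has `∫₀¹ trace[T B^s T B^(1-s)] ds - trace[R B] ≤ 0`. -/
theorem lieb_trace_inequality {n : ℕ}
    (A C : Matrix (Fin n) (Fin n) ℂ) (hA : A.PosDef) (hC : C.IsHermitian)
    (B : Matrix (Fin n) (Fin n) ℂ) (hB : B.PosSemidef)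
    (T R : Matrix (Fin n) (Fin n) ℂ)
    (hT : T = Matrix.of fun a b =>
      ∫ τ in Set.Ioi (0 : ℝ),
        ((A + (τ : ℂ) • 1)⁻¹ * C * (A + (τ : ℂ) • 1)⁻¹) a b)
    (hR : R = Matrix.of fun a b =>
      2 * ∫ τ in Set.Ioi (0 : ℝ),
        ((A + (τ : ℂ) • 1)⁻¹ * C * (A + (τ : ℂ) • 1)⁻¹ * C * (A + (τ : ℂ) • 1)⁻¹) a b) :
    (∫ s in (0 : ℝ)..1, (Matrix.trace (T * matRpow B s * T * matRpow B (1 - s))).re)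
        - (Matrix.trace (R * B)).re ≤ 0 := by
  have hT₂ : T = resolventIntegral₂ A C := by
    ext i j
    exact (congrFun₂ hT i j).trans ((hasIntegralOn_resolventIntegral₂ hA C).entry i j).2
  have hR₃ : R = (2 : ℝ) • resolventIntegral₃ A C := by
    ext i j
    rw [hR, of_apply, ((hasIntegralOn_resolventIntegral₃ hA C).entry i j).2, Matrix.smul_apply,
      Complex.real_smul, Complex.ofReal_ofNat]
  obtain ⟨Y, hYT, hYR⟩ := exists_hasIntegralOn_resolventIntegral hA hC
  have hTstar : Tᴴ = T := hT₂ ▸ (isHermitian_resolventIntegral₂ hA hC).eq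
  rw [← hT₂] at hYT
  rw [← hR₃] at hYR
  have hle := integral_re_trace_matRpow_le hB hYT hYR
  rw [hTstar] at hle
  exact sub_nonpos.2 hle
end
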